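/- (Main Theorem) For all finite non-empty sets Λ and C, hj_C(1,Λ) ≤ f^{8,*}_Λ(|Λ|² · w_C(|Λ|, 1), C). -/

import Mathlib

open Finset

/-- `ν` belongs to the subspace `S(⟨Ms ℓ : ℓ < m⟩, ρ)` of `U_{Fin k, Λ}`: it agrees with `ρ`
off the blocks and is constant on each block `Ms ℓ`. -/
def InSubspace {Λ : Type*} {k m : ℕ} (Ms : Fin m → Finset (Fin k))
    (ρ : Fin k → Λ) (ν : Fin k → Λ) : Prop :=
  (∀ t : Fin k, (∀ ℓ, t ∉ Ms ℓ) → ν t = ρ t) ∧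
    ∀ ℓ : Fin m, ∃ a : Λ, ∀ t ∈ Ms ℓ, ν t = a

/-- The number of blocks `Ms ℓ` on which `ν` is constantly `α`. -/
def blockCount {Λ : Type*} [DecidableEq Λ] {k m : ℕ} (Ms : Fin m → Finset (Fin k))
    (ν : Fin k → Λ) (α : Λ) : ℕ :=
  (Finset.univ.filter fun ℓ : Fin m => ∀ t ∈ Ms ℓ, ν t = α).card

/-- `k` is large enough for the `m`-dimensional Hales-Jewett property: every `C`-coloring of
`U_{Fin k, Λ}` admits a monochromatic `m`-dimensional subspace. -/
def HJProp (Λ C : Type*) (m k : ℕ) : Prop :=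
  ∀ d : (Fin k → Λ) → C,
    ∃ (Ms : Fin m → Finset (Fin k)) (ρ : Fin k → Λ),
      (∀ ℓ, (Ms ℓ).Nonempty) ∧
      (∀ ℓ₁ ℓ₂, ℓ₁ ≠ ℓ₂ → Disjoint (Ms ℓ₁) (Ms ℓ₂)) ∧
      ∃ c : C, ∀ ν, InSubspace Ms ρ ν → d ν = c

/-- The Hales-Jewett number `hj_C(m, Λ)`. -/
noncomputable def hjNum (Λ C : Type*) (m : ℕ) : ℕ := sInf {k | HJProp Λ C m k}

/-- Like `HJProp`, but the blocks of the monochromatic subspace all have the same size. -/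
def HJEqProp (Λ C : Type*) (m k : ℕ) : Prop :=
  ∀ d : (Fin k → Λ) → C,
    ∃ (Ms : Fin m → Finset (Fin k)) (ρ : Fin k → Λ),
      (∀ ℓ, (Ms ℓ).Nonempty) ∧
      (∀ ℓ₁ ℓ₂, ℓ₁ ≠ ℓ₂ → Disjoint (Ms ℓ₁) (Ms ℓ₂)) ∧
      (∀ ℓ₁ ℓ₂, (Ms ℓ₁).card = (Ms ℓ₂).card) ∧
      ∃ c : C, ∀ ν, InSubspace Ms ρ ν → d ν = c

/-- The number `hj^=_C(m, Λ)`. -/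
noncomputable def hjEqNum (Λ C : Type*) (m : ℕ) : ℕ := sInf {k | HJEqProp Λ C m k}

/-- The partition property underlying `f^8_Λ(m, C)`: `d` is constant on the set of members
`ν` of the subspace realizing each letter `α` on exactly `m / |Λ|` many blocks. -/
def F8Prop (Λ C : Type*) [Fintype Λ] [DecidableEq Λ] (m k : ℕ) : Prop :=
  ∀ d : (Fin k → Λ) → C,
    ∃ (Ms : Fin m → Finset (Fin k)) (ρ : Fin k → Λ),
      (∀ ℓ, (Ms ℓ).Nonempty) ∧
      (∀ ℓ₁ ℓ₂, ℓ₁ ≠ ℓ₂ → Disjoint (Ms ℓ₁) (Ms ℓ₂)) ∧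
      ∃ c : C, ∀ ν, InSubspace Ms ρ ν →
        (∀ α : Λ, blockCount Ms ν α = m / Fintype.card Λ) → d ν = c

/-- Shelah's number `f^8_Λ(m, C)`. -/
noncomputable def f8 (Λ C : Type*) [Fintype Λ] [DecidableEq Λ] (m : ℕ) : ℕ :=
  sInf {k | F8Prop Λ C m k}

/-- As `F8Prop`, but with all blocks of the same size. -/
def F9Prop (Λ C : Type*) [Fintype Λ] [DecidableEq Λ] (m k : ℕ) : Prop :=
  ∀ d : (Fin k → Λ) → C,
    ∃ (Ms : Fin m → Finset (Fin k)) (ρ : Fin k → Λ),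
      (∀ ℓ, (Ms ℓ).Nonempty) ∧
      (∀ ℓ₁ ℓ₂, ℓ₁ ≠ ℓ₂ → Disjoint (Ms ℓ₁) (Ms ℓ₂)) ∧
      (∀ ℓ₁ ℓ₂, (Ms ℓ₁).card = (Ms ℓ₂).card) ∧
      ∃ c : C, ∀ ν, InSubspace Ms ρ ν →
        (∀ α : Λ, blockCount Ms ν α = m / Fintype.card Λ) → d ν = c

/-- Shelah's number `f^9_Λ(m, C)`: the minimal `k` divisible by `|Λ|` with `F9Prop`. -/
noncomputable def f9 (Λ C : Type*) [Fintype Λ] [DecidableEq Λ] (m : ℕ) : ℕ :=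
  sInf {k | Fintype.card Λ ∣ k ∧ F9Prop Λ C m k}

/-- The partition property underlying `f^{8,*}_Λ(m, C)`: any two members of the subspace
realizing each letter on the same number of blocks get the same color. -/
def F8StarProp (Λ C : Type*) [DecidableEq Λ] (m k : ℕ) : Prop :=
  ∀ d : (Fin k → Λ) → C,
    ∃ (Ms : Fin m → Finset (Fin k)) (ρ : Fin k → Λ),
      (∀ ℓ, (Ms ℓ).Nonempty) ∧
      (∀ ℓ₁ ℓ₂, ℓ₁ ≠ ℓ₂ → Disjoint (Ms ℓ₁) (Ms ℓ₂)) ∧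
      ∀ ν₁ ν₂, InSubspace Ms ρ ν₁ → InSubspace Ms ρ ν₂ →
        (∀ α : Λ, blockCount Ms ν₁ α = blockCount Ms ν₂ α) → d ν₁ = d ν₂

/-- Shelah's number `f^{8,*}_Λ(m, C)`. -/
noncomputable def f8Star (Λ C : Type*) [DecidableEq Λ] (m : ℕ) : ℕ :=
  sInf {k | F8StarProp Λ C m k}

/-- As `F8StarProp`, but with all blocks of the same size. -/
def F9StarProp (Λ C : Type*) [DecidableEq Λ] (m k : ℕ) : Prop :=
  ∀ d : (Fin k → Λ) → C,
    ∃ (Ms : Fin m → Finset (Fin k)) (ρ : Fin k → Λ),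
      (∀ ℓ, (Ms ℓ).Nonempty) ∧
      (∀ ℓ₁ ℓ₂, ℓ₁ ≠ ℓ₂ → Disjoint (Ms ℓ₁) (Ms ℓ₂)) ∧
      (∀ ℓ₁ ℓ₂, (Ms ℓ₁).card = (Ms ℓ₂).card) ∧
      ∀ ν₁ ν₂, InSubspace Ms ρ ν₁ → InSubspace Ms ρ ν₂ →
        (∀ α : Λ, blockCount Ms ν₁ α = blockCount Ms ν₂ α) → d ν₁ = d ν₂

/-- Shelah's number `f^{9,*}_Λ(m, C)`: the minimal `k` divisible by `|Λ|` with `F9StarProp`. -/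
noncomputable def f9Star (Λ C : Type*) [Fintype Λ] [DecidableEq Λ] (m : ℕ) : ℕ :=
  sInf {k | Fintype.card Λ ∣ k ∧ F9StarProp Λ C m k}

/-- As `F9StarProp`, but with all blocks of size exactly `n`. -/
def F9StarFixedProp (Λ C : Type*) [DecidableEq Λ] (n m k : ℕ) : Prop :=
  ∀ d : (Fin k → Λ) → C,
    ∃ (Ms : Fin m → Finset (Fin k)) (ρ : Fin k → Λ),
      (∀ ℓ, (Ms ℓ).card = n) ∧
      (∀ ℓ₁ ℓ₂, ℓ₁ ≠ ℓ₂ → Disjoint (Ms ℓ₁) (Ms ℓ₂)) ∧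
      ∀ ν₁ ν₂, InSubspace Ms ρ ν₁ → InSubspace Ms ρ ν₂ →
        (∀ α : Λ, blockCount Ms ν₁ α = blockCount Ms ν₂ α) → d ν₁ = d ν₂

/-- Shelah's number `f^{9,*}_{Λ,n}(m, C)`. -/
noncomputable def f9StarFixed (Λ C : Type*) [Fintype Λ] [DecidableEq Λ] (n m : ℕ) : ℕ :=
  sInf {k | Fintype.card Λ ∣ k ∧ F9StarFixedProp Λ C n m k}

/-- The partition property underlying `f^{13}_Λ(m, C)`: there is an `m`-element set `N` and
`ρ` on its complement such that any two extensions of `ρ` realizing each letter equally often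
on `N` get the same color. -/
def F13Prop (Λ C : Type*) [DecidableEq Λ] (m k : ℕ) : Prop :=
  ∀ d : (Fin k → Λ) → C,
    ∃ N : Finset (Fin k), N.card = m ∧
      ∃ ρ : Fin k → Λ, ∀ η₁ η₂ : Fin k → Λ,
        (∀ t ∉ N, η₁ t = ρ t) → (∀ t ∉ N, η₂ t = ρ t) →
        (∀ α : Λ, (N.filter fun t => η₁ t = α).card = (N.filter fun t => η₂ t = α).card) →
        d η₁ = d η₂

/-- The number `f^{13}_Λ(m, C)` of Golshani-Shelah. -/
noncomputable def f13 (Λ C : Type*) [DecidableEq Λ] (m : ℕ) : ℕ :=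
  sInf {k | F13Prop Λ C m k}

/-- The Gallai-Witt property: every `C`-coloring of `U_{h,n}` (the `h`-tuples of numbers
below `n`) is constant on a homothetic copy `{⟨m_e + d'⬝i_e : e < h⟩ : i_0, …, i_{h-1} ≤ m}`
of the cube `{0, …, m}^h`. -/
def GWProp (C : Type*) (h m n : ℕ) : Prop :=
  ∀ d : (Fin h → Fin n) → C,
    ∃ d' : ℕ, 0 < d' ∧ ∃ ms : Fin h → ℕ,
      (∀ e, ms e + d' * m < n) ∧
      ∃ c : C, ∀ i : Fin h → ℕ, (∀ e, i e ≤ m) →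
        ∀ hlt : ∀ e, ms e + d' * i e < n,
          d (fun e => ⟨ms e + d' * i e, hlt e⟩) = c

/-- The Gallai-Witt number `w_C(h, m)`. -/
noncomputable def gwNum (C : Type*) (h m : ℕ) : ℕ := sInf {n | GWProp C h m n}

/-- The van der Waerden property: every coloring of `{0, …, N-1}` with `r` colors contains a
monochromatic arithmetic progression of length `m` (with positive common difference). -/
def VDWProp (r m N : ℕ) : Prop :=
  ∀ d : Fin N → Fin r,
    ∃ a dd : ℕ, 0 < dd ∧ (∀ i < m, a + i * dd < N) ∧
      ∃ c : Fin r, ∀ i : ℕ, i < m → ∀ h : a + i * dd < N, d ⟨a + i * dd, h⟩ = c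

/-- The van der Waerden number `w(r, m)`. -/
noncomputable def vdwNum (r m : ℕ) : ℕ := sInf {N | VDWProp r m N}

/-- The coloring `d` of `U_{Fin k, Λ}` admits a monochromatic (combinatorial) line. -/
def HasMonoLine {Λ C : Type*} {k : ℕ} (d : (Fin k → Λ) → C) : Prop :=
  ∃ N : Finset (Fin k), N.Nonempty ∧ ∃ ρ : Fin k → Λ, ∃ c : C,
    ∀ η : Fin k → Λ, (∀ t ∉ N, η t = ρ t) → (∃ a : Λ, ∀ t ∈ N, η t = a) → d η = c

/-- Property `(⊕)` for `m*`: for every `C`-coloring `d` of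
`Ω = {⟨ℓ_α : α ∈ Λ⟩ : Σ_α ℓ_α = m*}` there are `ℓ* > 0` and `⟨ℓ*_α : α ∈ Λ⟩` such that all the
tuples `ℓ̄^α` (obtained from `⟨ℓ*_β⟩` by increasing the `α`-entry by `ℓ*`) lie in `Ω` and get
the same color. -/
def OplusProp (Λ C : Type*) [Fintype Λ] [DecidableEq Λ] (mstar : ℕ) : Prop :=
  ∀ d : (Λ → ℕ) → C,
    ∃ lstar : ℕ, 0 < lstar ∧ ∃ ls : Λ → ℕ,
      (∀ α : Λ, (∑ β : Λ, Function.update ls α (ls α + lstar) β) = mstar) ∧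
      ∃ c : C, ∀ α : Λ, d (Function.update ls α (ls α + lstar)) = c

/-!
A coloring of `U_{k,Λ}` that, on an `m`-dimensional subspace `V`, only depends on how many blocks
carry each letter induces a coloring of the tuples `⟨ℓ_α : α ∈ Λ⟩` with `∑ ℓ_α = m`. A line of
`U_{m,Λ}` with `ℓ_β` coordinates fixed to `β` and `n` moving coordinates meets exactly the tuples
`ℓ + n • e_α`, so by property `(⊕)` some such line is monochromatic, and `V` carries it to a
monochromatic line of `U_{k,Λ}`.

To get `(⊕)` from the Gallai–Witt property, fix a letter `α₀` and drop the `α₀`-entry of each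
tuple, which is recovered from the others through the sum `m`; the tuples `ℓ + n • e_α` then become
vertices of a homothetic copy of the cube `{0, 1}^Λ`.
-/

section Completion

variable {ι : Type*} [DecidableEq ι]

lemma update_self_add {M : Type*} [AddZeroClass M] (f : ι → M) (i : ι) (a : M) :
    Function.update f i (f i + a) = f + Pi.single i a := by
  ext j
  obtain rfl | hj := eq_or_ne j i <;> simp [*]

variable [Fintype ι] {m : ℕ} {i₀ : ι} {x y : ι → ℕ}

/-- The tuple that agrees with `x` off `i₀` and has entries summing to `m`. The subtraction is
truncated, so the sum is `m` only when the entries of `x` off `i₀` sum to at most `m`. -/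
def completion (m : ℕ) (i₀ : ι) (x : ι → ℕ) : ι → ℕ :=
  Function.update x i₀ (m - ∑ i ∈ univ.erase i₀, x i)

lemma sum_completion (hx : ∑ i ∈ univ.erase i₀, x i ≤ m) : ∑ i, completion m i₀ x i = m := by
  rw [completion, sum_update_of_mem (mem_univ i₀), sdiff_singleton_eq_erase, Nat.sub_add_cancel hx]

lemma completion_of_ne {i : ι} (hi : i ≠ i₀) : completion m i₀ x i = x i :=
  Function.update_of_ne hi _ _

lemma completion_eq_of_sum_eq (hy : ∑ i, y i = m) (hxy : ∀ i ≠ i₀, x i = y i) :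
    completion m i₀ x = y := by
  have hsum : ∑ i ∈ univ.erase i₀, x i = ∑ i ∈ univ.erase i₀, y i :=
    sum_congr rfl fun i hi => hxy i (ne_of_mem_erase hi)
  have hsplit := add_sum_erase univ y (mem_univ i₀)
  ext i
  obtain rfl | hi := eq_or_ne i i₀
  · rw [completion, Function.update_self]
    omega
  · rw [completion_of_ne hi, hxy i hi]

lemma sum_erase_add_le {n w : ℕ} (i₀ : ι) (h : ∀ i, x i + n ≤ w) :
    ∑ i ∈ univ.erase i₀, x i + n ≤ Fintype.card ι * w :=
  calc ∑ i ∈ univ.erase i₀, x i + n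
      ≤ ∑ i ∈ univ.erase i₀, (x i + n) + (x i₀ + n) := by gcongr <;> omega
    _ = ∑ i, (x i + n) := sum_erase_add _ _ (mem_univ i₀)
    _ ≤ Fintype.card ι * w := sum_le_card_nsmul _ _ _ fun i _ => h i

end Completion

section LetterCount

variable {Λ ι : Type*} [DecidableEq Λ] [Fintype ι]

/-- The number of coordinates of the word `x` carrying the letter `α`. For the word
`l.idxFun` of a combinatorial line `l`, the letter `none` marks the moving coordinates. -/
def letterCount (x : ι → Λ) (α : Λ) : ℕ :=
  #{i | x i = α}

lemma exists_letterCount_eq [Fintype Λ] {g : Λ → ℕ} (hg : ∑ a, g a = Fintype.card ι) :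
    ∃ x : ι → Λ, letterCount x = g := by
  let e : ι ≃ Σ a, Fin (g a) := Fintype.equivOfCardEq (by simp [hg])
  refine ⟨fun i => (e i).1, funext fun a => ?_⟩
  rw [letterCount, ← Fintype.card_subtype, ← Fintype.card_fin (g a)]
  exact Fintype.card_congr <|
    (e.subtypeEquiv fun _ => Iff.rfl).trans (Equiv.sigmaSubtype a)

end LetterCount

section Line

variable {Λ ι : Type*} [DecidableEq Λ] [Fintype ι]

lemma letterCount_idxFun_none_pos (l : Combinatorics.Line Λ ι) : 0 < letterCount l.idxFun none :=
  let ⟨i, hi⟩ := l.proper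
  card_pos.mpr ⟨i, by simpa using hi⟩

lemma sum_line_apply {M : Type*} [AddCommMonoid M] (l : Combinatorics.Line Λ ι) (f : Λ → M)
    (α : Λ) : ∑ i, f (l α i) =
      ∑ i, (l.idxFun i).elim 0 f + letterCount l.idxFun none • f α := by
  rw [letterCount, ← sum_const, sum_filter, ← sum_add_distrib]
  refine sum_congr rfl fun i _ => ?_
  cases hi : l.idxFun i <;> simp [hi]

lemma letterCount_line_apply (l : Combinatorics.Line Λ ι) (α : Λ) :
    letterCount (l α) =
      (fun β => letterCount l.idxFun (some β)) + Pi.single α (letterCount l.idxFun none) := by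
  ext β
  rw [letterCount, card_filter, sum_line_apply l (fun a => if a = β then 1 else 0) α, Pi.add_apply]
  congr 1
  · rw [letterCount, card_filter]
    refine sum_congr rfl fun i _ => ?_
    cases l.idxFun i <;> simp
  · simp [Pi.single_apply, eq_comm]

lemma exists_line_letterCount_eq [Fintype Λ] {g : Λ → ℕ} {n : ℕ} (hn : 0 < n)
    (hg : ∑ a, g a + n = Fintype.card ι) :
    ∃ l : Combinatorics.Line Λ ι, ∀ α, letterCount (l α) = g + Pi.single α n := by
  obtain ⟨f, hf⟩ : ∃ f : ι → Option Λ, letterCount f = fun o => o.elim n g :=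
    exists_letterCount_eq <| by
      simpa only [Fintype.sum_option, Option.elim_none, Option.elim_some, add_comm] using hg
  have hnone : letterCount f none = n := congrFun hf none
  obtain ⟨i, hi⟩ := card_pos.mp (hnone.symm ▸ hn : 0 < letterCount f none)
  refine ⟨⟨f, i, (mem_filter.mp hi).2⟩, fun α => ?_⟩
  rw [letterCount_line_apply, hnone, hf]
  rfl

/-- Adding up the coordinates maps each line over the alphabet `{0, …, m}^h` onto a homothetic copy
of `{0, …, m}^h`, whose ratio is the number of moving coordinates. -/
lemma exists_gwProp (C : Type*) [Finite C] (h m : ℕ) : ∃ n, GWProp C h m n := by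
  obtain ⟨ι, _, hι⟩ :=
    Combinatorics.Line.exists_mono_in_high_dimension (Fin h → Fin (m + 1)) C
  have sum_lt (v : ι → Fin h → Fin (m + 1)) (e : Fin h) :
      ∑ i, (v i e : ℕ) < Fintype.card ι * m + 1 :=
    Nat.lt_succ_of_le <| sum_le_card_nsmul univ _ m fun i _ => Nat.le_of_lt_succ (v i e).isLt
  refine ⟨Fintype.card ι * m + 1, fun d => ?_⟩
  obtain ⟨l, c, hl⟩ := hι fun v => d fun e => ⟨∑ i, (v i e : ℕ), sum_lt v e⟩
  have sum_apply (x : Fin h → Fin (m + 1)) (e : Fin h) :=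
    sum_line_apply l (fun a => (a e : ℕ)) x
  refine ⟨letterCount l.idxFun none, letterCount_idxFun_none_pos l,
    fun e => ∑ i, (l.idxFun i).elim 0 fun a => (a e : ℕ), fun e => ?_, c, fun i hi hlt => ?_⟩
  · have := sum_lt (l fun _ => Fin.last m) e
    rwa [sum_apply, smul_eq_mul, Fin.val_last] at this
  · rw [← hl fun e => ⟨i e, Nat.lt_succ_of_le (hi e)⟩]
    congr! 3 with e
    exact (sum_apply (fun e => ⟨i e, Nat.lt_succ_of_le (hi e)⟩) e).symm

end Line

section Oplus

variable {Λ C : Type*} [Fintype Λ] [DecidableEq Λ] [Nonempty Λ]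

lemma GWProp.oplusProp {w m : ℕ} (hw : GWProp C (Fintype.card Λ) 1 w)
    (hm : Fintype.card Λ * w ≤ m) : OplusProp Λ C m := by
  intro D
  obtain ⟨α₀⟩ := ‹Nonempty Λ›
  let e := Fintype.equivFin Λ
  obtain ⟨n, hn, b, hb, c, hc⟩ := hw fun x => D (completion m α₀ fun α => x (e α))
  simp only [mul_one] at hb
  have hsum : ∑ α ∈ univ.erase α₀, b (e α) + n ≤ m :=
    (sum_erase_add_le α₀ fun α => (hb (e α)).le).trans hm
  let ls : Λ → ℕ := completion (m - n) α₀ fun α => b (e α)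
  have hls (α : Λ) : ∑ β, (ls + Pi.single α n : Λ → ℕ) β = m := by
    simp only [Pi.add_apply, sum_add_distrib, Fintype.sum_pi_single', ls,
      sum_completion (Nat.le_sub_of_add_le hsum), Nat.sub_add_cancel (le_of_add_le_right hsum)]
  refine ⟨n, hn, ls, fun α => by rw [update_self_add, hls], c, fun α => ?_⟩
  have hle (j : Fin (Fintype.card Λ)) : (Pi.single (e α) 1 : _ → ℕ) j ≤ 1 := by
    rw [Pi.single_apply]
    split_ifs <;> simp
  have hlt (j : Fin (Fintype.card Λ)) : b j + n * (Pi.single (e α) 1 : _ → ℕ) j < w := by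
    have := Nat.mul_le_mul_left n (hle j)
    have := hb j
    omega
  rw [update_self_add, ← hc _ hle hlt]
  congr 1
  -- For `α = α₀` the shifted coordinate is the one that `completion` discards.
  refine (completion_eq_of_sum_eq (hls α) fun β hβ => ?_).symm
  simp [ls, completion_of_ne hβ, Pi.single_apply]

lemma OplusProp.exists_line_isMono {ι : Type*} [Fintype ι]
    (h : OplusProp Λ C (Fintype.card ι)) {d : (ι → Λ) → C}
    (hd : d.FactorsThrough letterCount) : ∃ l : Combinatorics.Line Λ ι, l.IsMono d := by
  obtain ⟨α₀⟩ := ‹Nonempty Λ›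
  let D : (Λ → ℕ) → C := Function.extend letterCount d fun _ => d fun _ => α₀
  have hD (x : ι → Λ) : D (letterCount x) = d x := hd.extend_apply _ x
  obtain ⟨n, hn, ls, hsum, c, hc⟩ := h D
  simp only [update_self_add] at hsum hc
  have hcard : ∑ α, ls α + n = Fintype.card ι := by
    simpa [sum_add_distrib] using hsum α₀
  obtain ⟨l, hl⟩ := exists_line_letterCount_eq hn hcard
  exact ⟨l, c, fun α => by rw [← hD, hl, hc]⟩

end Oplus

section Subspace

variable {η η' Λ C ι : Type*}

/-- The image under `V` of the subspace `W` of `V`'s parameter cube. -/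
def subspaceComp (V : Combinatorics.Subspace η Λ ι) (W : Combinatorics.Subspace η' Λ η) :
    Combinatorics.Subspace η' Λ ι where
  idxFun i := (V.idxFun i).elim Sum.inl W.idxFun
  proper e' :=
    let ⟨e, he⟩ := W.proper e'
    let ⟨i, hi⟩ := V.proper e
    ⟨i, by simp [hi, he]⟩

lemma subspaceComp_apply (V : Combinatorics.Subspace η Λ ι) (W : Combinatorics.Subspace η' Λ η)
    (x : η' → Λ) : subspaceComp V W x = V (W x) := by
  ext i
  cases hi : V.idxFun i <;> simp [Combinatorics.Subspace.apply_def, subspaceComp, hi]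

variable {m k : ℕ} {V : Combinatorics.Subspace (Fin m) Λ (Fin k)} {Ms : Fin m → Finset (Fin k)}
  {ρ ν : Fin k → Λ}

/-- Mathlib's combinatorial subspace `V` is the subspace `S(⟨Ms ℓ : ℓ < m⟩, ρ)`: its block with
parameter `ℓ` is `Ms ℓ`, and off the blocks its fixed letters are those of `ρ`. -/
structure Represents (V : Combinatorics.Subspace (Fin m) Λ (Fin k))
    (Ms : Fin m → Finset (Fin k)) (ρ : Fin k → Λ) : Prop where
  mem_iff : ∀ t ℓ, t ∈ Ms ℓ ↔ V.idxFun t = Sum.inr ℓ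
  eq_of_inl : ∀ t a, V.idxFun t = Sum.inl a → ρ t = a

namespace Represents

lemma nonempty (h : Represents V Ms ρ) (ℓ : Fin m) : (Ms ℓ).Nonempty :=
  let ⟨t, ht⟩ := V.proper ℓ
  ⟨t, (h.mem_iff t ℓ).mpr ht⟩

lemma disjoint (h : Represents V Ms ρ) (ℓ₁ ℓ₂ : Fin m) (hne : ℓ₁ ≠ ℓ₂) :
    Disjoint (Ms ℓ₁) (Ms ℓ₂) :=
  disjoint_left.mpr fun t h₁ h₂ => hne <| Sum.inr_injective <|
    ((h.mem_iff t ℓ₁).mp h₁).symm.trans ((h.mem_iff t ℓ₂).mp h₂)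

lemma apply_of_mem (h : Represents V Ms ρ) (x : Fin m → Λ) {t : Fin k} {ℓ : Fin m}
    (ht : t ∈ Ms ℓ) : V x t = x ℓ :=
  Combinatorics.Subspace.apply_inr ((h.mem_iff t ℓ).mp ht)

lemma apply_of_forall_notMem (h : Represents V Ms ρ) (x : Fin m → Λ) {t : Fin k}
    (ht : ∀ ℓ, t ∉ Ms ℓ) : V x t = ρ t := by
  rcases ha : V.idxFun t with a | ℓ
  · rw [h.eq_of_inl t a ha, Combinatorics.Subspace.apply_inl ha]
  · exact absurd ((h.mem_iff t ℓ).mpr ha) (ht ℓ)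

lemma inSubspace_iff (h : Represents V Ms ρ) : InSubspace Ms ρ ν ↔ ∃ x, V x = ν := by
  constructor
  · rintro ⟨hρ, hconst⟩
    choose x hx using hconst
    refine ⟨x, funext fun t => ?_⟩
    by_cases ht : ∃ ℓ, t ∈ Ms ℓ
    · obtain ⟨ℓ, ht⟩ := ht
      rw [h.apply_of_mem x ht, hx ℓ t ht]
    · have ht := not_exists.mp ht
      rw [h.apply_of_forall_notMem x ht, hρ t ht]
  · rintro ⟨x, rfl⟩
    exact ⟨fun t => h.apply_of_forall_notMem x, fun ℓ => ⟨x ℓ, fun t => h.apply_of_mem x⟩⟩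

lemma blockCount_apply [DecidableEq Λ] (h : Represents V Ms ρ) (x : Fin m → Λ) :
    blockCount Ms (V x) = letterCount x := by
  ext α
  refine congrArg card <| filter_congr fun ℓ _ => ⟨fun hα => ?_, fun hα t ht => ?_⟩
  · obtain ⟨t, ht⟩ := h.nonempty ℓ
    rw [← h.apply_of_mem x ht, hα t ht]
  · rw [h.apply_of_mem x ht, hα]

end Represents

lemma exists_represents_of_subspace [Nonempty Λ] (V : Combinatorics.Subspace (Fin m) Λ (Fin k)) :
    ∃ Ms ρ, Represents V Ms ρ := by
  classical
  obtain ⟨α₀⟩ := ‹Nonempty Λ›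
  exact ⟨fun ℓ => {t | V.idxFun t = Sum.inr ℓ}, V fun _ => α₀, by simp,
    fun _ _ => Combinatorics.Subspace.apply_inl⟩

lemma exists_represents_of_blocks (ρ : Fin k → Λ) (hne : ∀ ℓ, (Ms ℓ).Nonempty)
    (hdisj : ∀ ℓ₁ ℓ₂, ℓ₁ ≠ ℓ₂ → Disjoint (Ms ℓ₁) (Ms ℓ₂)) :
    ∃ V, Represents V Ms ρ := by
  classical
  let w : Fin k → Λ ⊕ Fin m := fun t =>
    if h : ∃ ℓ, t ∈ Ms ℓ then Sum.inr h.choose else Sum.inl (ρ t)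
  have mem_iff (t : Fin k) (ℓ : Fin m) : t ∈ Ms ℓ ↔ w t = Sum.inr ℓ := by
    refine ⟨fun ht => ?_, fun ht => ?_⟩
    · have h : ∃ ℓ, t ∈ Ms ℓ := ⟨ℓ, ht⟩
      have hℓ : h.choose = ℓ := by
        by_contra hne'
        exact disjoint_left.mp (hdisj _ _ hne') h.choose_spec ht
      rw [← hℓ]
      exact dif_pos h
    · by_cases h : ∃ ℓ, t ∈ Ms ℓ
      · obtain rfl : h.choose = ℓ := Sum.inr_injective ((dif_pos h).symm.trans ht)
        exact h.choose_spec
      · simp [w, h] at ht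
  refine ⟨⟨w, fun ℓ => (hne ℓ).imp fun t => (mem_iff t ℓ).mp⟩, mem_iff, fun t a ht => ?_⟩
  by_cases h : ∃ ℓ, t ∈ Ms ℓ
  · simp [w, h] at ht
  · exact Sum.inl_injective ((dif_neg h).symm.trans ht)

lemma hjProp_of_exists_isMono [Nonempty Λ]
    (h : ∀ d : (Fin k → Λ) → C, ∃ V : Combinatorics.Subspace (Fin m) Λ (Fin k), V.IsMono d) :
    HJProp Λ C m k := by
  intro d
  obtain ⟨V, c, hc⟩ := h d
  obtain ⟨Ms, ρ, hV⟩ := exists_represents_of_subspace V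
  refine ⟨Ms, ρ, hV.nonempty, hV.disjoint, c, fun ν hν => ?_⟩
  obtain ⟨x, rfl⟩ := hV.inSubspace_iff.mp hν
  exact hc x

lemma F8StarProp.exists_factorsThrough_letterCount [DecidableEq Λ] (h : F8StarProp Λ C m k)
    (d : (Fin k → Λ) → C) : ∃ V : Combinatorics.Subspace (Fin m) Λ (Fin k),
      (fun x => d (V x)).FactorsThrough letterCount := by
  obtain ⟨Ms, ρ, hne, hdisj, hd⟩ := h d
  obtain ⟨V, hV⟩ := exists_represents_of_blocks ρ hne hdisj
  refine ⟨V, fun x y hxy => hd _ _ ?_ ?_ fun α => ?_⟩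
  · exact hV.inSubspace_iff.mpr ⟨x, rfl⟩
  · exact hV.inSubspace_iff.mpr ⟨y, rfl⟩
  · rw [hV.blockCount_apply, hV.blockCount_apply, hxy]

end Subspace

section HalesJewett

variable {Λ C : Type*} {m k : ℕ}

lemma exists_hjProp (Λ C : Type*) [Finite Λ] [Nonempty Λ] [Finite C] (m : ℕ) :
    ∃ k, HJProp Λ C m k :=
  (Combinatorics.Subspace.exists_mono_in_high_dimension_fin Λ C (Fin m)).imp
    fun _ => hjProp_of_exists_isMono

lemma HJProp.f8StarProp [DecidableEq Λ] (h : HJProp Λ C m k) : F8StarProp Λ C m k := by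
  intro d
  obtain ⟨Ms, ρ, hne, hdisj, c, hc⟩ := h d
  exact ⟨Ms, ρ, hne, hdisj, fun ν₁ ν₂ h₁ h₂ _ => (hc ν₁ h₁).trans (hc ν₂ h₂).symm⟩

lemma F8StarProp.hjProp_one [Fintype Λ] [DecidableEq Λ] [Nonempty Λ] (h : F8StarProp Λ C m k)
    (ho : OplusProp Λ C m) : HJProp Λ C 1 k := by
  refine hjProp_of_exists_isMono fun d => ?_
  obtain ⟨V, hV⟩ := h.exists_factorsThrough_letterCount d
  rw [← Fintype.card_fin m] at ho
  obtain ⟨l, c, hl⟩ := ho.exists_line_isMono hV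
  let W : Combinatorics.Subspace (Fin 1) Λ (Fin m) :=
    l.toSubspaceUnit.reindex (Equiv.ofUnique Unit (Fin 1)) (Equiv.refl Λ) (Equiv.refl (Fin m))
  have hW : W.IsMono fun x => d (V x) := by
    simpa [W] using ⟨c, hl⟩
  exact ⟨subspaceComp V W, by simpa only [Combinatorics.Subspace.IsMono, subspaceComp_apply]⟩

end HalesJewett

theorem hj_le_f8Star_general (Λ C : Type*) [Fintype Λ] [DecidableEq Λ] [Nonempty Λ] [Finite C]
    {m : ℕ} (hm : Fintype.card Λ * gwNum C (Fintype.card Λ) 1 ≤ m) :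
    hjNum Λ C 1 ≤ f8Star Λ C m := by
  have hgw : GWProp C (Fintype.card Λ) 1 (gwNum C (Fintype.card Λ) 1) :=
    Nat.sInf_mem (exists_gwProp C _ _)
  have hf : F8StarProp Λ C m (f8Star Λ C m) :=
    Nat.sInf_mem ((exists_hjProp Λ C m).imp fun _ => HJProp.f8StarProp)
  exact Nat.sInf_le (hf.hjProp_one (hgw.oplusProp hm))

/-- **Main Theorem**: `hj_C(1, Λ) ≤ f^{8,*}_Λ(|Λ|² · w_C(|Λ|, 1), C)`. -/
theorem hj_le_f8Star (Λ C : Type*) [Fintype Λ] [DecidableEq Λ] [Nonempty Λ]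
    [Fintype C] [Nonempty C] :
    hjNum Λ C 1 ≤ f8Star Λ C (Fintype.card Λ ^ 2 * gwNum C (Fintype.card Λ) 1) :=
  hj_le_f8Star_general Λ C (Nat.mul_le_mul_right _ (Nat.le_self_pow two_ne_zero _))
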